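/- Let K be a field, S = K[x_1,…,x_n], 𝔪 = (x_1,…,x_n), let A ⊆ ℕⁿ be a finite nonempty set of exponent vectors with pairwise disjoint supports (so I = (x^a : a ∈ A) is a monomial complete intersection), such that the union of the supports is all of {1,…,n}, and such that some a ∈ A has at least two nonzero entries (i.e. some minimal generator is not a pure power of a variable). Then for every integer k ≥ 0, (I𝔪^{k+1} : 𝔪) = I𝔪^{k}; that is, I𝔪^k is weakly 𝔪-full for all k ≥ 0. -/

import Mathlib

open MvPolynomial Pointwise in
theorem aux_mem (K : Type*) [Field K] (n : ℕ) (A : Set (Fin n →₀ ℕ)) (k : ℕ)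
    (p : MvPolynomial (Fin n) K) :
    p ∈ Ideal.span ((fun a : Fin n →₀ ℕ => monomial a (1 : K)) '' A) *
      (Ideal.span (Set.range (X : Fin n → MvPolynomial (Fin n) K))) ^ k ↔
    ∀ u ∈ p.support, ∃ a ∈ A, a ≤ u ∧ a.degree + k ≤ u.degree := by
  have h1 : (Ideal.span (Set.range (X : Fin n → MvPolynomial (Fin n) K))) ^ k =
      Ideal.span ((fun a : Fin n →₀ ℕ => monomial a (1 : K)) '' {c | k ≤ c.degree}) := by
    ext q
    rw [mem_ideal_span_monomial_image]
    refine (mem_pow_idealOfVars_iff k q).trans (forall₂_congr fun u hu => ?_)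
    constructor
    · intro h
      exact ⟨u, h, le_rfl⟩
    · rintro ⟨c, hc, hcu⟩
      exact le_trans hc (Finsupp.degree_mono hcu)
  have h2 : ((fun a : Fin n →₀ ℕ => monomial a (1 : K)) '' A) *
      ((fun a : Fin n →₀ ℕ => monomial a (1 : K)) '' {c | k ≤ c.degree}) =
      (fun a : Fin n →₀ ℕ => monomial a (1 : K)) '' {d | ∃ a ∈ A, ∃ c, k ≤ c.degree ∧ a + c = d} := by
    ext q
    simp only [Set.mem_mul, Set.mem_image, Set.mem_ofPred_eq]
    constructor
    · rintro ⟨_, ⟨a, ha, rfl⟩, _, ⟨c, hc, rfl⟩, rfl⟩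
      exact ⟨a + c, ⟨a, ha, c, hc, rfl⟩, by simp [monomial_mul]⟩
    · rintro ⟨_, ⟨a, ha, c, hc, rfl⟩, rfl⟩
      exact ⟨_, ⟨a, ha, rfl⟩, _, ⟨c, hc, rfl⟩, by simp [monomial_mul]⟩
  rw [h1, Ideal.span_mul_span, h2, mem_ideal_span_monomial_image]
  refine forall₂_congr fun u hu => ?_
  constructor
  · rintro ⟨_, ⟨a, ha, c, hc, rfl⟩, hu⟩
    refine ⟨a, ha, le_trans (le_add_of_nonneg_right zero_le) hu, ?_⟩
    have := Finsupp.degree_mono hu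
    rw [map_add] at this
    omega
  · rintro ⟨a, ha, hau, hd⟩
    obtain ⟨c, rfl⟩ := le_iff_exists_add.mp hau
    refine ⟨_, ⟨a, ha, c, ?_, rfl⟩, le_rfl⟩
    rw [map_add] at hd
    omega


/-- Let `I = (x^a : a ∈ A)` be a monomial complete intersection (pairwise disjoint
supports) whose supports cover `{1,…,n}`, with some generator not a pure power.
Then `(I𝔪^{k+1} : 𝔪) = I𝔪^k` for every `k ≥ 0`. -/
theorem stmt_7 (K : Type*) [Field K] (n : ℕ) (A : Finset (Fin n →₀ ℕ))
    (hAne : A.Nonempty)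
    (hdisj : ∀ a ∈ A, ∀ b ∈ A, a ≠ b → Disjoint a.support b.support)
    (hcover : ∀ i : Fin n, ∃ a ∈ A, 0 < a i)
    (hnonpure : ∃ a ∈ A, 2 ≤ a.support.card)
    (m I : Ideal (MvPolynomial (Fin n) K))
    (hm : m = Ideal.span (Set.range (MvPolynomial.X : Fin n → MvPolynomial (Fin n) K)))
    (hI : I = Ideal.span ((fun a : Fin n →₀ ℕ => MvPolynomial.monomial a (1 : K)) '' A))
    (k : ℕ) :
    (I * m ^ (k + 1)).colon m = I * m ^ k := by
  subst hm hI
  apply le_antisymm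
  · intro p hp
    rw [Submodule.mem_colon] at hp
    rw [aux_mem]
    intro u hu
    have key : ∀ i : Fin n, ∃ a ∈ A, a ≤ u + Finsupp.single i 1 ∧ a.degree + k ≤ u.degree := by
      intro i
      have h := hp (MvPolynomial.X i) (Ideal.subset_span ⟨i, rfl⟩)
      rw [smul_eq_mul, aux_mem] at h
      obtain ⟨a, ha, h1, h2⟩ := h (u + Finsupp.single i 1) (by
        rw [MvPolynomial.mem_support_iff, MvPolynomial.coeff_mul_X]
        exact MvPolynomial.mem_support_iff.mp hu)
      refine ⟨a, ha, h1, ?_⟩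
      rw [map_add, Finsupp.degree_single] at h2
      omega
    by_contra hcon
    have hcon' : ∀ a ∈ A, a.degree + k ≤ u.degree → ¬ a ≤ u := fun a ha hd hau =>
      hcon ⟨a, ha, hau, hd⟩
    obtain ⟨a, ha, hcard⟩ := hnonpure
    have claim : ∀ i ∈ a.support, a ≤ u + Finsupp.single i 1 ∧ u i < a i := by
      intro i hi
      obtain ⟨b, hb, hbu, hd⟩ := key i
      have hlt : u i < b i := by
        by_contra hle
        refine hcon' b hb hd fun j => ?_
        by_cases hj : j = i
        · subst hj
          omega
        · have := hbu j
          rw [Finsupp.add_apply, Finsupp.single_apply, if_neg (Ne.symm hj)] at this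
          omega
      have hba : b = a := by
        by_contra hne
        exact Finset.disjoint_left.mp (hdisj b hb a ha hne)
          (Finsupp.mem_support_iff.mpr (by omega)) hi
      subst hba
      exact ⟨hbu, hlt⟩
    obtain ⟨i, hi, j, hj, hij⟩ := Finset.one_lt_card.mp hcard
    have h1 := (claim j hj).1 i
    have h2 := (claim i hi).2
    rw [Finsupp.add_apply, Finsupp.single_apply, if_neg (Ne.symm hij)] at h1
    omega
  · intro p hp
    rw [Submodule.mem_colon]
    intro s hs
    rw [pow_succ, ← mul_assoc, smul_eq_mul]
    exact Ideal.mul_mem_mul hp hs
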